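/- arXiv:2407.15696 — 5 statements merged into one kernel-verified Lean document; each statement's English description precedes it below -/
import Mathlib

section
/- Let R be a commutative ring, r ≥ 1, λ_1,…,λ_r ∈ R and n_1,…,n_r positive integers with N = n_1+⋯+n_r, and let V be the associated confluent Vandermonde matrix. Then det(V) = ∏_{1 ≤ k < l ≤ r} (λ_l − λ_k)^{n_k · n_l}. (No distinctness assumption on the λ_k is needed.) -/
/-!
The proof is a triangularisation by row operations. For `p = (l, i)` consider the Newton-type
polynomial `P_p = (∏_{m < l} (X - λ_m) ^ n_m) * (X - λ_l) ^ i`. It is monic of degree `e p`, so the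
matrix `A` of coefficients of these polynomials is unitriangular. The entry of `A * V` at row
`p` and column `q = (k, j)` is the `j`-th Hasse derivative of `P_p` at `λ_k`, i.e. the coefficient
of `X ^ j` in the Taylor expansion of `P_p` at `λ_k`. It vanishes when `q` precedes `p`:
if `k < l` because `(X - λ_k) ^ n_k` divides `P_p`, and if `k = l`, `j < i` because
`(X - λ_l) ^ i` divides `P_p`. Thus `A * V` is upper triangular, its diagonal entry at `(l, i)` is
`∏_{m < l} (λ_l - λ_m) ^ n_m`, and `det V` is the product of these entries over all `(l, i)`.
-/

open Finset

open Polynomial in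
/-- The Newton-type polynomial `(∏_{m < l} (X - λ_m) ^ n_m) * (X - λ_l) ^ i` attached to the
position `p = (l, i)`. -/
noncomputable def newtonPoly {R : Type*} [CommRing R] {r : ℕ} (lam : Fin r → R) (n : Fin r → ℕ)
    (p : Σ k : Fin r, Fin (n k)) : R[X] :=
  (∏ m ∈ univ.filter (fun m => m < p.1), (X - C (lam m)) ^ n m) * (X - C (lam p.1)) ^ (p.2 : ℕ)

section newtonPoly

open Polynomial

variable {R : Type*} [CommRing R] {r : ℕ} (lam : Fin r → R) (n : Fin r → ℕ)

lemma newtonPoly_monic (p : Σ k : Fin r, Fin (n k)) : (newtonPoly lam n p).Monic :=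
  (monic_prod_of_monic _ _ fun _ _ => (monic_X_sub_C _).pow _).mul ((monic_X_sub_C _).pow _)

lemma newtonPoly_natDegree [Nontrivial R] (p : Σ k : Fin r, Fin (n k)) :
    (newtonPoly lam n p).natDegree =
      (∑ i ∈ univ.filter (fun i => i < p.1), n i) + (p.2 : ℕ) := by
  rw [newtonPoly, Monic.natDegree_mul
    (monic_prod_of_monic _ _ fun _ _ => (monic_X_sub_C _).pow _) ((monic_X_sub_C _).pow _),
    natDegree_prod_of_monic _ _ fun _ _ => (monic_X_sub_C _).pow _,
    (monic_X_sub_C _).natDegree_pow, natDegree_X_sub_C, mul_one]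
  congr 1
  refine Finset.sum_congr rfl fun m _ => ?_
  rw [(monic_X_sub_C _).natDegree_pow, natDegree_X_sub_C, mul_one]

lemma coeff_taylor_eq_zero_of_dvd {f : R[X]} {a : R} {d j : ℕ} (h : (X - C a) ^ d ∣ f)
    (hj : j < d) : (taylor a f).coeff j = 0 := by
  obtain ⟨g, rfl⟩ := h
  have hX : taylor a (X - C a) = X := by simp
  rw [taylor_mul, taylor_pow, hX, mul_comm, coeff_mul_X_pow', if_neg (by omega)]

lemma coeff_taylor_newtonPoly_of_fst_lt {p q : Σ k : Fin r, Fin (n k)} (h : q.1 < p.1) :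
    (taylor (lam q.1) (newtonPoly lam n p)).coeff q.2 = 0 := by
  refine coeff_taylor_eq_zero_of_dvd (d := n q.1) (Dvd.dvd.mul_right ?_ _) q.2.2
  exact Finset.dvd_prod_of_mem (fun m => (X - C (lam m)) ^ n m) (by simpa using h)

lemma coeff_taylor_newtonPoly_self (p : Σ k : Fin r, Fin (n k)) :
    (taylor (lam p.1) (newtonPoly lam n p)).coeff p.2 =
      ∏ m ∈ univ.filter (fun m => m < p.1), (lam p.1 - lam m) ^ n m := by
  have hX : taylor (lam p.1) (X - C (lam p.1)) = X := by simp
  rw [newtonPoly, taylor_mul, taylor_pow, hX, coeff_mul_X_pow', if_pos le_rfl, Nat.sub_self,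
    taylor_coeff_zero, eval_prod]
  simp

/-- A Taylor coefficient as the pairing of the coefficients with a confluent Vandermonde column. -/
lemma sum_coeff_mul_choose {N : ℕ} {f : R[X]} (hf : f.natDegree < N) (a : R) (j : ℕ) :
    ∑ i : Fin N, f.coeff i * ((Nat.choose (i : ℕ) j : R) * a ^ ((i : ℕ) - j)) =
      (taylor a f).coeff j := by
  rw [Fin.sum_univ_eq_sum_range (fun i => f.coeff i * ((Nat.choose i j : R) * a ^ (i - j)))]
  conv_rhs => rw [f.as_sum_range' N hf]
  rw [taylor_coeff, map_sum, eval_finsetSum]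
  refine Finset.sum_congr rfl fun i _ => ?_
  rw [hasseDeriv_monomial, eval_monomial]
  ring

end newtonPoly

/-- The positions in an earlier block precede those in a later block. -/
lemma blockIndex_lt_of_fst_lt {r : ℕ} {n : Fin r → ℕ} {p q : Σ k : Fin r, Fin (n k)}
    (h : p.1 < q.1) :
    (∑ i ∈ univ.filter (fun i => i < p.1), n i) + (p.2 : ℕ) <
      (∑ i ∈ univ.filter (fun i => i < q.1), n i) + (q.2 : ℕ) := by
  have h1 : n p.1 + ∑ i ∈ univ.filter (fun i => i < p.1), n i ≤
      ∑ i ∈ univ.filter (fun i => i < q.1), n i := by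
    rw [← Finset.sum_insert (by simp)]
    refine Finset.sum_le_sum_of_subset fun i hi => ?_
    simp only [Finset.mem_insert, Finset.mem_filter, Finset.mem_univ, true_and] at hi ⊢
    rcases hi with rfl | hi
    · exact h
    · exact hi.trans h
  have := p.2.2
  omega

/-- **Determinant of the confluent Vandermonde matrix.**
Given `r ≥ 1`, scalars `λ 1, …, λ r` in a commutative ring `R` and positive
integers `n 1, …, n r` with `N = n 1 + ⋯ + n r`, the confluent Vandermonde
matrix `V` is the `N × N` matrix whose rows are indexed by `i = 0, …, N-1` and
whose columns are grouped into consecutive blocks (block `k` having columns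
`j = 0, …, n k - 1`; the grouping is encoded by the equivalence `e`), with the
entry in row `i` of the `j`-th column of block `k` equal to
`C(i, j) * (λ k) ^ (i - j)`.  Then
`det V = ∏_{k < l} (λ l - λ k) ^ (n k * n l)`, with no distinctness assumption. -/
theorem confluent_vandermonde_det
    (R : Type*) [CommRing R] (r : ℕ) (hr : 1 ≤ r)
    (lam : Fin r → R) (n : Fin r → ℕ) (hn : ∀ k, 0 < n k)
    (e : (Σ k : Fin r, Fin (n k)) ≃ Fin (∑ u, n u))
    (he : ∀ p : Σ k : Fin r, Fin (n k),
      (e p : ℕ) = (∑ i ∈ univ.filter (fun i => i < p.1), n i) + (p.2 : ℕ))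
    (V : Matrix (Fin (∑ u, n u)) (Fin (∑ u, n u)) R)
    (hV : ∀ (i : Fin (∑ u, n u)) (p : Σ k : Fin r, Fin (n k)),
      V i (e p) = (Nat.choose (i : ℕ) (p.2 : ℕ) : R) * lam p.1 ^ ((i : ℕ) - (p.2 : ℕ))) :
    V.det = ∏ k : Fin r, ∏ l ∈ Ioi k, (lam l - lam k) ^ (n k * n l) := by
  nontriviality R
  set P : Fin (∑ u, n u) → Polynomial R := fun a => newtonPoly lam n (e.symm a) with hP
  have hdeg : ∀ a, (P a).natDegree = a := fun a => by
    rw [hP, newtonPoly_natDegree, ← he, e.apply_symm_apply]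
  set A : Matrix (Fin (∑ u, n u)) (Fin (∑ u, n u)) R := Matrix.of fun a i => (P a).coeff i with hA
  have hAdet : A.det = 1 := by
    rw [← Matrix.det_transpose]
    exact Matrix.det_matrixOfPolynomials P hdeg fun a => newtonPoly_monic lam n _
  have hAV : ∀ p q, (A * V) (e p) (e q) =
      (Polynomial.taylor (lam q.1) (newtonPoly lam n p)).coeff q.2 := fun p q => by
    have hlt : (newtonPoly lam n p).natDegree < ∑ u, n u := by
      rw [newtonPoly_natDegree, ← he]
      exact (e p).2
    rw [← sum_coeff_mul_choose hlt, Matrix.mul_apply]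
    refine Finset.sum_congr rfl fun i _ => ?_
    rw [hV, hA, Matrix.of_apply, hP]
    simp only [e.symm_apply_apply]
  have htri : (A * V).BlockTriangular id := by
    intro a b hab
    obtain ⟨p, rfl⟩ := e.surjective a
    obtain ⟨q, rfl⟩ := e.surjective b
    have hqp : (e q : ℕ) < e p := hab
    rw [hAV]
    rcases lt_trichotomy q.1 p.1 with h | h | h
    · exact coeff_taylor_newtonPoly_of_fst_lt lam n h
    · obtain ⟨k, i⟩ := p
      obtain ⟨l, j⟩ := q
      obtain rfl : l = k := h
      rw [he, he] at hqp
      exact coeff_taylor_eq_zero_of_dvd (Dvd.intro_left _ rfl) (Nat.lt_of_add_lt_add_left hqp)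
    · have := blockIndex_lt_of_fst_lt h
      rw [he, he] at hqp
      omega
  calc V.det = (A * V).det := by rw [Matrix.det_mul, hAdet, one_mul]
    _ = ∏ p, (A * V) (e p) (e p) := by
      rw [Matrix.det_of_isUpperTriangular htri]
      exact (e.prod_comp fun a => (A * V) a a).symm
    _ = ∏ l, ∏ k ∈ univ.filter (fun k => k < l), (lam l - lam k) ^ (n k * n l) := by
      simp_rw [hAV, coeff_taylor_newtonPoly_self]
      rw [Fintype.prod_sigma]
      refine Finset.prod_congr rfl fun l _ => ?_
      simp only [Finset.prod_const, Finset.card_univ, Fintype.card_fin, ← Finset.prod_pow, pow_mul]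
    _ = _ := Finset.prod_comm' (by simp)
end

section
/- Let R be an integral domain, r ≥ 1, λ_1,…,λ_r ∈ R and n_1,…,n_r positive integers with N = n_1+⋯+n_r, and let V be the associated confluent Vandermonde matrix. Then det(V) ≠ 0 if and only if the scalars λ_1,…,λ_r are pairwise distinct. In particular, over a field, V is invertible if and only if λ_1,…,λ_r are pairwise distinct. -/
/-!
A row vector `v` is the coefficient vector of a polynomial `f` of degree less than `N`, and the
entry of `v ᵥ* V` in column `(k, j)` is the `j`-th Taylor coefficient of `f` at `lam k`. So a left
kernel vector of `V` is a polynomial of degree less than `N` which, for every `k`, vanishes at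
`lam k` to order at least `n k`. When the `lam k` are distinct, such a polynomial would have at
least `N` roots with multiplicity, hence it is zero and `det V ≠ 0`. When `lam k = lam l` with
`k ≠ l`, the first columns of the two blocks coincide and `det V = 0`.
-/

open Polynomial in
/-- Taylor coefficients in terms of coefficients: this identifies `v ᵥ* V` with the Taylor data of
the polynomial with coefficient vector `v`. -/
lemma taylor_sum_monomial_coeff {R : Type*} [CommRing R] {N : ℕ} (v : Fin N → R) (a : R) (j : ℕ) :
    (taylor a (∑ i : Fin N, monomial (i : ℕ) (v i))).coeff j
      = ∑ i : Fin N, v i * ((Nat.choose (i : ℕ) j : R) * a ^ ((i : ℕ) - j)) := by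
  rw [map_sum, finsetSum_coeff]
  refine Finset.sum_congr rfl fun i _ => ?_
  rw [taylor_monomial, coeff_C_mul, coeff_X_add_C_pow]
  ring

open Polynomial in
/-- A nonzero polynomial vanishing to order `n k` at distinct points `lam k` has degree at least
`∑ k, n k`. -/
lemma sum_le_natDegree_of_taylor_coeff_eq_zero {R : Type*} [CommRing R] [IsDomain R] {ι : Type*}
    [Fintype ι] {lam : ι → R} (hlam : Function.Injective lam) (n : ι → ℕ) {f : R[X]} (hf : f ≠ 0)
    (h : ∀ k, ∀ j < n k, (taylor (lam k) f).coeff j = 0) :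
    ∑ k, n k ≤ f.natDegree := by
  classical
  have hmult : ∀ k, n k ≤ f.roots.count (lam k) := fun k => by
    rw [count_roots, le_rootMultiplicity_iff hf, X_sub_C_pow_dvd_iff, X_pow_dvd_iff]
    exact h k
  calc ∑ k, n k ≤ ∑ k, f.roots.count (lam k) := Finset.sum_le_sum fun k _ => hmult k
    _ = ∑ a ∈ Finset.univ.image lam, f.roots.count a :=
        (Finset.sum_image (f := fun a => f.roots.count a) hlam.injOn).symm
    _ ≤ ∑ a ∈ Finset.univ.image lam ∪ f.roots.toFinset, f.roots.count a :=
        Finset.sum_le_sum_of_subset Finset.subset_union_left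
    _ = f.roots.card :=
        Multiset.sum_count_eq_card fun a ha =>
          Finset.mem_union_right _ (Multiset.mem_toFinset.2 ha)
    _ ≤ f.natDegree := card_roots' f



open Finset

/-- **Nonsingularity of the confluent Vandermonde matrix.**
Over an integral domain, the determinant of the confluent Vandermonde matrix
(rows indexed by `i = 0, …, N-1`, columns grouped into consecutive blocks via
the equivalence `e`, entry in row `i`, column `(k, j)` equal to
`C(i, j) * (λ k) ^ (i - j)`) is nonzero if and only if the scalars
`λ 1, …, λ r` are pairwise distinct. -/
theorem confluent_vandermonde_det_ne_zero_iff
    (R : Type*) [CommRing R] [IsDomain R] (r : ℕ) (hr : 1 ≤ r)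
    (lam : Fin r → R) (n : Fin r → ℕ) (hn : ∀ k, 0 < n k)
    (e : (Σ k : Fin r, Fin (n k)) ≃ Fin (∑ u, n u))
    (he : ∀ p : Σ k : Fin r, Fin (n k),
      (e p : ℕ) = (∑ i ∈ univ.filter (fun i => i < p.1), n i) + (p.2 : ℕ))
    (V : Matrix (Fin (∑ u, n u)) (Fin (∑ u, n u)) R)
    (hV : ∀ (i : Fin (∑ u, n u)) (p : Σ k : Fin r, Fin (n k)),
      V i (e p) = (Nat.choose (i : ℕ) (p.2 : ℕ) : R) * lam p.1 ^ ((i : ℕ) - (p.2 : ℕ))) :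
    V.det ≠ 0 ↔ ∀ k l : Fin r, k ≠ l → lam k ≠ lam l := by
  constructor
  · intro hdet k l hkl heq
    have hcol : e ⟨k, ⟨0, hn k⟩⟩ ≠ e ⟨l, ⟨0, hn l⟩⟩ := fun h =>
      hkl (congrArg Sigma.fst (e.injective h))
    refine hdet (Matrix.det_zero_of_column_eq hcol fun i => ?_)
    rw [hV, hV]
    simp [heq]
  · intro hlam hdet
    have hinj : Function.Injective lam := fun k l h => by
      by_contra hkl
      exact hlam k l hkl h
    obtain ⟨v, hv, hvV⟩ := Matrix.exists_vecMul_eq_zero_iff.2 hdet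
    set f : Polynomial R := ∑ i : Fin (∑ u, n u), Polynomial.monomial (i : ℕ) (v i) with hf_def
    have hcoeff : ∀ i : Fin (∑ u, n u), f.coeff i = v i := fun i => by
      simp [hf_def, Polynomial.finsetSum_coeff, Polynomial.coeff_monomial, Fin.val_inj]
    have hf : f ≠ 0 := fun h => hv <| funext fun i => by
      rw [← hcoeff, h, Polynomial.coeff_zero, Pi.zero_apply]
    have hdeg : f.natDegree < ∑ u, n u := by
      rw [Polynomial.natDegree_lt_iff_degree_lt hf, ← Polynomial.mem_degreeLT]
      exact Submodule.sum_mem _ fun i _ => Polynomial.mem_degreeLT.2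
        ((Polynomial.degree_monomial_le _ _).trans_lt (by exact_mod_cast i.2))
    refine hdeg.not_ge (sum_le_natDegree_of_taylor_coeff_eq_zero hinj n hf fun k j hj => ?_)
    have hentry := congrFun hvV (e ⟨k, ⟨j, hj⟩⟩)
    simp only [Matrix.vecMul, dotProduct, hV, Pi.zero_apply] at hentry
    rw [hf_def, taylor_sum_monomial_coeff, hentry]
end

section
/- Let λ_1,…,λ_r be pairwise distinct real numbers and n_1,…,n_r positive integers with N = n_1+⋯+n_r, and write p(s) = ∏_{k=1}^r (s−λ_k)^{n_k} = s^N + Σ_{i=0}^{N−1} a_{N−i} s^i (so a_1,…,a_N are the coefficients below the leading one, a_m being the coefficient of s^{N−m}). For each k define K_{k,n_k} = 1 / ∏_{i≠k} (λ_k−λ_i)^{n_i}, and define recursively, for q = 0, 1, …, n_k−2, the quantities L_{ki}^{(q+1)} = q!·(λ_k−λ_i)^q·K_{k,n_k−q} − q·L_{ki}^{(q)} for each i ≠ k (with L_{ki}^{(0)} = 0), and K_{k,n_k−q−1} = −(1/(q+1)!)·Σ_{i≠k} n_i·L_{ki}^{(q+1)}/(λ_k−λ_i)^{q+1}. For each k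 define vectors h_{k,1},…,h_{k,N} ∈ ℝ^{n_k} by h_{k,1} = (K_{k,1}, K_{k,2}, …, K_{k,n_k})^T and h_{k,m+1} = J(λ_k,n_k)·h_{k,m} + a_m·h_{k,1} for m = 1,…,N−1. Let W be the N×N matrix whose rows are grouped into consecutive blocks of sizes n_1,…,n_r, where the block of rows corresponding to k is the n_k×N matrix W_k = [h_{k,N} | h_{k,N−1} | ⋯ | h_{k,1}] (i.e., the c-th column of W_k, for c = 1,…,N, is the vector h_{k,N+1−c}). Then W = V^{-1}, i.e., V·W = I_N, where V is the associated confluent Vandermonde matrix. -/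
open Finset Polynomial

/-!
Let `p = ∏ (s - λ k) ^ n k`, of degree `N`. Around `λ k` write `p = X ^ n k · G` with
`X = s - λ k`, and let `F = 1 / G` as a power series in `X`. Logarithmic differentiation of `F`
is exactly the coupled recursion for `K` and `L`, so `K (k, n k - q)` is the `q`-th coefficient
of `F` (`recursion_solution`). On vectors whose `t`-th entry is the coefficient of
`X ^ (n k - 1 - t)` of a power series, the Jordan block acts as multiplication by
`λ k + X`, that is by `s`. Hence the vectors `h (k, m)` run through the Horner scheme of `p`:
`h (k, N - c)` encodes `F` times the Taylor expansion at `λ k` of the quotient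
`Q_c` of `p` by `s ^ (c + 1)`.

The row `i` of `V` consists of the Taylor coefficients of `s ^ i` at the nodes, so the `(i, c)`
entry of `V W` is a sum of Cauchy products, namely `∑ k Res_{λ k} (s ^ i Q_c / p)` (`resSum`).
By partial fractions (`eq_sum_polar`), this sum of residues is the coefficient of `s ^ (N - 1)`
of the numerator when its degree is below `N` (`resSum_eq_coeff`), and multiples of `p`
contribute nothing. Comparing degrees gives `1` if `i = c` and `0` otherwise
(`resSum_X_pow_mul_horner`).
-/

noncomputable section

namespace ConfluentVandermonde

/-! ### Taylor expansions as power series -/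

/-- The Taylor expansion of a real polynomial at `c`, as a power series in the local
parameter `X` standing for `s - c`. -/
def tay (c : ℝ) : ℝ[X] →+* PowerSeries ℝ :=
  (coeToPowerSeries.ringHom).comp (taylorAlgHom c : ℝ[X] →ₐ[ℝ] ℝ[X]).toRingHom

lemma tay_apply (c : ℝ) (q : ℝ[X]) : tay c q = ((taylor c q : ℝ[X]) : PowerSeries ℝ) := rfl

lemma tay_X (c : ℝ) : tay c X = PowerSeries.X + PowerSeries.C c := by
  simp [tay_apply]

lemma tay_C (c a : ℝ) : tay c (C a) = PowerSeries.C a := by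
  simp [tay_apply]

/-- The linear power series `X + d`: the expansion at `c` of `s - a`, where `d = c - a`. -/
def lin (d : ℝ) : PowerSeries ℝ := PowerSeries.X + PowerSeries.C d

lemma tay_X_sub_C (c a : ℝ) : tay c (X - C a) = lin (c - a) := by
  rw [map_sub, tay_X, tay_C, lin, map_sub]; ring

lemma lin_zero : lin 0 = PowerSeries.X := by simp [lin]

lemma lin_mul_inv {d : ℝ} (hd : d ≠ 0) : lin d * (lin d)⁻¹ = 1 :=
  PowerSeries.mul_inv_cancel _ (by simpa [lin] using hd)

/-- A polynomial whose Taylor expansion at `c` vanishes to order `m` is divisible by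
`(X - c) ^ m`. -/
lemma pow_dvd_of_tay {c : ℝ} {m : ℕ} {q : ℝ[X]} (hq : PowerSeries.X ^ m ∣ tay c q) :
    (X - C c) ^ m ∣ q := by
  have h1 : (X : ℝ[X]) ^ m ∣ taylor c q := by
    rw [PowerSeries.X_pow_dvd_iff] at hq
    rw [Polynomial.X_pow_dvd_iff]
    intro d hd
    simpa [tay_apply] using hq d hd
  obtain ⟨g, hg⟩ := h1
  have h2 := congrArg (taylor (-c)) hg
  rw [taylor_taylor, taylor_mul, taylor_pow, taylor_X] at h2
  simp only [neg_add_cancel, taylor_zero, map_neg] at h2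
  exact ⟨_, by rw [h2, sub_eq_add_neg]⟩

/-! ### The recursion for the local coefficients -/

section Local

variable {ι : Type*}

/-- The power series `1 / ∏_{i ∈ s} (X + d i) ^ n i` (meaningful when every `d i` is nonzero). It
is the expansion of `1 / ∏ (z - lam i) ^ n i` at `z = lam k` when `d i = lam k - lam i`. -/
def invProd (s : Finset ι) (d : ι → ℝ) (n : ι → ℕ) : PowerSeries ℝ :=
  ∏ i ∈ s, (lin (d i))⁻¹ ^ n i

lemma constantCoeff_invProd (s : Finset ι) (d : ι → ℝ) (n : ι → ℕ) :
    PowerSeries.coeff 0 (invProd s d n) = 1 / ∏ i ∈ s, d i ^ n i := by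
  simp [invProd, lin, PowerSeries.constantCoeff_inv]

lemma prod_mul_invProd (s : Finset ι) (d : ι → ℝ) (n : ι → ℕ) (hd : ∀ i ∈ s, d i ≠ 0) :
    (∏ i ∈ s, lin (d i) ^ n i) * invProd s d n = 1 := by
  rw [invProd, ← Finset.prod_mul_distrib]
  refine Finset.prod_eq_one fun i hi => ?_
  rw [← mul_pow, lin_mul_inv (hd i hi), one_pow]

/-- Logarithmic differentiation of `1 / ∏ (X + d i) ^ n i`. -/
lemma derivative_invProd (s : Finset ι) (d : ι → ℝ) (n : ι → ℕ) :
    PowerSeries.derivative ℝ (invProd s d n) =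
      -∑ i ∈ s, (n i : PowerSeries ℝ) * (invProd s d n * (lin (d i))⁻¹) := by
  classical
  induction s using Finset.induction_on with
  | empty => simp [invProd]
  | insert j s hj ih =>
    have hpow : PowerSeries.derivative ℝ ((lin (d j))⁻¹ ^ n j) =
        -((n j : PowerSeries ℝ) * ((lin (d j))⁻¹ ^ n j * (lin (d j))⁻¹)) := by
      have hlin : PowerSeries.derivative ℝ (lin (d j)) = 1 := by
        simp [lin, PowerSeries.derivative_C]
      rw [Derivation.leibniz_pow, PowerSeries.derivative_inv', hlin]
      rcases Nat.eq_zero_or_pos (n j) with h0 | h0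
      · simp [h0]
      · obtain ⟨m, hm⟩ := Nat.exists_eq_succ_of_ne_zero h0.ne'
        rw [hm]
        simp only [nsmul_eq_mul, smul_eq_mul, Nat.succ_sub_one]
        generalize (lin (d j))⁻¹ = U
        rw [pow_succ U m]
        ring
    have hins : invProd (insert j s) d n = (lin (d j))⁻¹ ^ n j * invProd s d n := by
      rw [invProd, Finset.prod_insert hj, ← invProd]
    rw [hins, Derivation.leibniz, hpow, ih, Finset.sum_insert hj, smul_eq_mul, smul_eq_mul,
      mul_neg, Finset.mul_sum]
    have : ∑ i ∈ s, (lin (d j))⁻¹ ^ n j * ((n i : PowerSeries ℝ) * (invProd s d n * (lin (d i))⁻¹))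
        = ∑ i ∈ s, (n i : PowerSeries ℝ) *
          ((lin (d j))⁻¹ ^ n j * invProd s d n * (lin (d i))⁻¹) :=
      Finset.sum_congr rfl fun i _ => by ring
    rw [this]
    ring

/-- Coefficientwise form of `derivative_invProd`. -/
lemma coeff_succ_invProd (s : Finset ι) (d : ι → ℝ) (n : ι → ℕ) (q : ℕ) :
    PowerSeries.coeff (q + 1) (invProd s d n) * (q + 1) =
      -∑ i ∈ s, (n i : ℝ) * PowerSeries.coeff q (invProd s d n * (lin (d i))⁻¹) := by
  rw [← PowerSeries.coeff_derivative, derivative_invProd, map_neg, map_sum]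
  congr 1
  refine Finset.sum_congr rfl fun i _ => ?_
  rw [← nsmul_eq_mul, map_nsmul, nsmul_eq_mul]

lemma coeff_succ_lin_mul (d : ℝ) (F : PowerSeries ℝ) (q : ℕ) :
    PowerSeries.coeff (q + 1) (lin d * F) =
      PowerSeries.coeff q F + d * PowerSeries.coeff (q + 1) F := by
  rw [lin, add_mul, map_add, PowerSeries.coeff_succ_X_mul, PowerSeries.coeff_C_mul]

lemma coeff_zero_lin_mul (d : ℝ) (F : PowerSeries ℝ) :
    PowerSeries.coeff 0 (lin d * F) = d * PowerSeries.coeff 0 F := by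
  rw [lin, add_mul, map_add, PowerSeries.coeff_C_mul]
  simp

/-- The coupled recursion for `K` and `L`, at one fixed node, computes the coefficients of
`1 / ∏ (X + d i) ^ n i`: `K (m - q)` is the `q`-th coefficient, and `L i (q + 1)` is a
rescaling of the `q`-th coefficient after one further division by `X + d i`. -/
lemma recursion_solution (s : Finset ι) (d : ι → ℝ) (n : ι → ℕ) (hd : ∀ i ∈ s, d i ≠ 0)
    (m : ℕ) (K : ℕ → ℝ) (L : ι → ℕ → ℝ)
    (hKtop : K m = 1 / ∏ i ∈ s, d i ^ n i)
    (hL : ∀ i ∈ s, ∀ q, q + 2 ≤ m →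
      L i (q + 1) = (Nat.factorial q : ℝ) * d i ^ q * K (m - q) - (q : ℝ) * L i q)
    (hK : ∀ q, q + 2 ≤ m → K (m - q - 1) = -(1 / (Nat.factorial (q + 1) : ℝ)) *
      ∑ i ∈ s, (n i : ℝ) * L i (q + 1) / d i ^ (q + 1)) (q : ℕ) :
    (q < m → K (m - q) = PowerSeries.coeff q (invProd s d n)) ∧
    (q + 2 ≤ m → ∀ i ∈ s, L i (q + 1) =
      d i ^ (q + 1) * Nat.factorial q * PowerSeries.coeff q (invProd s d n * (lin (d i))⁻¹)) := by
  have hdiv : ∀ i ∈ s, lin (d i) * (invProd s d n * (lin (d i))⁻¹) = invProd s d n := by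
    intro i hi
    rw [mul_left_comm, lin_mul_inv (hd i hi), mul_one]
  induction q with
  | zero =>
    have h0 : K m = PowerSeries.coeff 0 (invProd s d n) := by
      rw [hKtop, constantCoeff_invProd]
    refine ⟨fun _ => by simpa using h0, fun hm i hi => ?_⟩
    have h1 := coeff_zero_lin_mul (d i) (invProd s d n * (lin (d i))⁻¹)
    rw [hdiv i hi] at h1
    rw [hL i hi 0 hm]
    simp only [Nat.factorial_zero, Nat.sub_zero, h0, h1]
    push_cast
    ring
  | succ q ih =>
    have hKq : q + 1 < m → K (m - (q + 1)) = PowerSeries.coeff (q + 1) (invProd s d n) := by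
      intro hq
      have hne : ((q : ℝ) + 1) ≠ 0 := by positivity
      have hf : (Nat.factorial q : ℝ) ≠ 0 := by exact_mod_cast (Nat.factorial_pos q).ne'
      have hsum : ∑ i ∈ s, (n i : ℝ) * L i (q + 1) / d i ^ (q + 1) =
          (Nat.factorial q : ℝ) *
            ∑ i ∈ s, (n i : ℝ) * PowerSeries.coeff q (invProd s d n * (lin (d i))⁻¹) := by
        rw [Finset.mul_sum]
        refine Finset.sum_congr rfl fun i hi => ?_
        rw [ih.2 (by omega) i hi]
        have := pow_ne_zero (q + 1) (hd i hi)
        field_simp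
      have hc := coeff_succ_invProd s d n q
      rw [← Nat.sub_sub, hK q (by omega), hsum, Nat.factorial_succ]
      push_cast
      rw [eq_neg_iff_add_eq_zero] at hc
      field_simp
      linarith
    refine ⟨hKq, fun hm i hi => ?_⟩
    have h1 := coeff_succ_lin_mul (d i) (invProd s d n * (lin (d i))⁻¹) q
    rw [hdiv i hi] at h1
    rw [hL i hi (q + 1) hm, hKq (by omega), h1, ih.2 (by omega) i hi, Nat.factorial_succ]
    push_cast
    ring

end Local

/-! ### Partial fractions and sums of residues -/

section Global

variable {r : ℕ}

/-- The polynomial `∏ (X - lam k) ^ n k`. -/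
def nodePoly (lam : Fin r → ℝ) (n : Fin r → ℕ) : ℝ[X] := ∏ k, (X - C (lam k)) ^ n k

/-- The expansion at `lam k` of `(s - lam k) ^ n k / nodePoly lam n`. -/
def F (lam : Fin r → ℝ) (n : Fin r → ℕ) (k : Fin r) : PowerSeries ℝ :=
  invProd (univ.erase k) (fun i => lam k - lam i) n

/-- The cofactor `∏_{i ≠ k} (X - lam i) ^ n i` of `nodePoly`. -/
def cof (lam : Fin r → ℝ) (n : Fin r → ℕ) (k : Fin r) : ℝ[X] :=
  ∏ i ∈ univ.erase k, (X - C (lam i)) ^ n i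

lemma nodePoly_eq (lam : Fin r → ℝ) (n : Fin r → ℕ) (k : Fin r) :
    nodePoly lam n = (X - C (lam k)) ^ n k * cof lam n k :=
  (Finset.mul_prod_erase univ (fun i => (X - C (lam i)) ^ n i) (mem_univ k)).symm

lemma monic_nodePoly (lam : Fin r → ℝ) (n : Fin r → ℕ) : (nodePoly lam n).Monic :=
  monic_prod_of_monic _ _ fun _ _ => (monic_X_sub_C _).pow _

lemma monic_cof (lam : Fin r → ℝ) (n : Fin r → ℕ) (k : Fin r) : (cof lam n k).Monic :=
  monic_prod_of_monic _ _ fun _ _ => (monic_X_sub_C _).pow _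

lemma natDegree_nodePoly (lam : Fin r → ℝ) (n : Fin r → ℕ) :
    (nodePoly lam n).natDegree = ∑ k, n k := by
  rw [nodePoly, natDegree_prod_of_monic _ _ fun _ _ => (monic_X_sub_C _).pow _]
  simp

lemma natDegree_cof_add (lam : Fin r → ℝ) (n : Fin r → ℕ) (k : Fin r) :
    (cof lam n k).natDegree + n k = ∑ i, n i := by
  rw [cof, natDegree_prod_of_monic _ _ fun _ _ => (monic_X_sub_C _).pow _]
  simp [Finset.sum_erase_add]

lemma tay_cof_mul_F (lam : Fin r → ℝ) (hlam : Function.Injective lam) (n : Fin r → ℕ)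
    (k : Fin r) : tay (lam k) (cof lam n k) * F lam n k = 1 := by
  rw [cof, map_prod, F]
  simp only [map_pow, tay_X_sub_C]
  refine prod_mul_invProd _ (fun i => lam k - lam i) _ fun i hi => ?_
  rw [sub_ne_zero]
  exact fun hh => (Finset.ne_of_mem_erase hi) (hlam hh).symm

/-- The sum over all nodes of the residues of `q / nodePoly`. -/
def resSum (lam : Fin r → ℝ) (n : Fin r → ℕ) (q : ℝ[X]) : ℝ :=
  ∑ k, PowerSeries.coeff (n k - 1) (F lam n k * tay (lam k) q)

lemma resSum_sub (lam : Fin r → ℝ) (n : Fin r → ℕ) (p q : ℝ[X]) :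
    resSum lam n (p - q) = resSum lam n p - resSum lam n q := by
  simp [resSum, mul_sub, Finset.sum_sub_distrib]

lemma resSum_mul_nodePoly (lam : Fin r → ℝ) (n : Fin r → ℕ) (hn : ∀ k, 0 < n k) (q : ℝ[X]) :
    resSum lam n (q * nodePoly lam n) = 0 := by
  refine Finset.sum_eq_zero fun k _ => ?_
  have hdvd : PowerSeries.X ^ n k ∣ F lam n k * tay (lam k) (q * nodePoly lam n) := by
    rw [nodePoly_eq lam n k, map_mul, map_mul, map_pow, tay_X_sub_C, sub_self, lin_zero]
    exact ⟨F lam n k * tay (lam k) q * tay (lam k) (cof lam n k), by ring⟩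
  exact PowerSeries.X_pow_dvd_iff.1 hdvd _ (Nat.sub_lt (hn k) one_pos)

/-- The part of the partial fraction decomposition of `q / nodePoly` at `lam k`, multiplied by
`(X - lam k) ^ n k`. -/
def polar (lam : Fin r → ℝ) (n : Fin r → ℕ) (q : ℝ[X]) (k : Fin r) : ℝ[X] :=
  taylor (-lam k) (PowerSeries.trunc (n k) (F lam n k * tay (lam k) q))

lemma natDegree_polar_le (lam : Fin r → ℝ) (n : Fin r → ℕ) (hn : ∀ k, 0 < n k) (q : ℝ[X])
    (k : Fin r) : (polar lam n q k).natDegree ≤ n k - 1 := by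
  rw [polar, natDegree_taylor]
  refine natDegree_le_iff_coeff_eq_zero.2 fun j hj => ?_
  rw [PowerSeries.coeff_trunc, if_neg (by have := hn k; omega)]

lemma coeff_polar (lam : Fin r → ℝ) (n : Fin r → ℕ) (hn : ∀ k, 0 < n k) (q : ℝ[X])
    (k : Fin r) : (polar lam n q k).coeff (n k - 1) =
      PowerSeries.coeff (n k - 1) (F lam n k * tay (lam k) q) := by
  set u := PowerSeries.trunc (n k) (F lam n k * tay (lam k) q) with hu
  have hdeg : u.natDegree ≤ n k - 1 := by
    refine natDegree_le_iff_coeff_eq_zero.2 fun j hj => ?_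
    rw [hu, PowerSeries.coeff_trunc, if_neg (by have := hn k; omega)]
  have hc : u.coeff (n k - 1) = PowerSeries.coeff (n k - 1) (F lam n k * tay (lam k) q) := by
    rw [hu, PowerSeries.coeff_trunc, if_pos (by have := hn k; omega)]
  rw [← hc, polar, ← hu]
  rcases hdeg.lt_or_eq with hlt | heq
  · rw [coeff_eq_zero_of_natDegree_lt hlt,
      coeff_eq_zero_of_natDegree_lt (by rwa [natDegree_taylor])]
  · rw [← heq]
    have := leadingCoeff_taylor (-lam k) u
    rwa [leadingCoeff, leadingCoeff, natDegree_taylor] at this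

/-- Partial fractions: a polynomial of degree less than that of `nodePoly` is the sum of its
polar parts multiplied by the corresponding cofactors. The difference vanishes to order `n k` at every `lam k`, so `nodePoly` divides it. -/
lemma eq_sum_polar (lam : Fin r → ℝ) (hlam : Function.Injective lam) (n : Fin r → ℕ)
    (hn : ∀ k, 0 < n k) (q : ℝ[X]) (hq : q.degree < (∑ k, n k : ℕ)) :
    q = ∑ k, cof lam n k * polar lam n q k := by
  rw [← sub_eq_zero]
  refine eq_zero_of_dvd_of_degree_lt (p := nodePoly lam n) ?_ ?_
  · refine Finset.prod_dvd_of_coprime (fun i _ j _ hij =>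
      (pairwise_coprime_X_sub_C hlam hij).pow) fun k _ => ?_
    rw [← Finset.add_sum_erase _ _ (mem_univ k), ← sub_sub]
    refine dvd_sub (pow_dvd_of_tay ?_) (Finset.dvd_sum fun i hi => ?_)
    · have hpol : tay (lam k) (polar lam n q k) =
          (PowerSeries.trunc (n k) (F lam n k * tay (lam k) q) : PowerSeries ℝ) := by
        rw [tay_apply, polar, taylor_taylor, add_neg_cancel, taylor_zero]
      have hq1 : tay (lam k) q =
          tay (lam k) (cof lam n k) * (F lam n k * tay (lam k) q) := by
        rw [← mul_assoc, tay_cof_mul_F lam hlam, one_mul]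
      rw [map_sub, map_mul, hpol]
      nth_rewrite 1 [hq1]
      rw [← mul_sub]
      refine Dvd.dvd.mul_left (PowerSeries.X_pow_dvd_iff.2 fun j hj => ?_) _
      rw [map_sub, Polynomial.coeff_coe, PowerSeries.coeff_trunc, if_pos hj, sub_self]
    · exact Dvd.dvd.mul_right (Finset.dvd_prod_of_mem (fun i => (X - C (lam i)) ^ n i)
        (mem_erase.2 ⟨(ne_of_mem_erase hi).symm, mem_univ k⟩)) _
  · rw [degree_eq_natDegree (monic_nodePoly lam n).ne_zero, natDegree_nodePoly]
    refine (degree_sub_le _ _).trans_lt (max_lt hq ?_)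
    refine (degree_sum_le _ _).trans_lt ((Finset.sup_lt_iff (WithBot.bot_lt_coe _)).2 fun k _ => ?_)
    refine (degree_le_natDegree).trans_lt (WithBot.coe_lt_coe.2 ?_)
    refine natDegree_mul_le.trans_lt ?_
    have h1 := natDegree_polar_le lam n hn q k
    have h2 := natDegree_cof_add lam n k
    have h3 := hn k
    show _ < ∑ k, n k
    omega

/-- Below the degree `N` of `nodePoly`, the sum of the residues of `q / nodePoly` is the
coefficient of `q` in degree `N - 1`. -/
lemma resSum_eq_coeff (lam : Fin r → ℝ) (hlam : Function.Injective lam) (n : Fin r → ℕ)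
    (hn : ∀ k, 0 < n k) (q : ℝ[X]) (hq : q.degree < (∑ k, n k : ℕ)) :
    resSum lam n q = q.coeff (∑ k, n k - 1) := by
  conv_rhs => rw [eq_sum_polar lam hlam n hn q hq]
  rw [finsetSum_coeff, resSum]
  refine Finset.sum_congr rfl fun k _ => ?_
  have h2 := natDegree_cof_add lam n k
  have h3 := hn k
  rw [show ∑ k, n k - 1 = (cof lam n k).natDegree + (n k - 1) by omega,
    coeff_mul_add_eq_of_natDegree_le le_rfl (natDegree_polar_le lam n hn q k),
    coeff_polar lam n hn, coeff_natDegree, (monic_cof lam n k).leadingCoeff, one_mul]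

/-! ### Horner quotients -/

/-- The Horner quotient of `p` by `X ^ c`, whose coefficients are those of `p` from
degree `c` on. -/
def horner (p : ℝ[X]) (c : ℕ) : ℝ[X] := divX^[c] p

lemma coeff_horner (p : ℝ[X]) (c j : ℕ) : (horner p c).coeff j = p.coeff (j + c) := by
  induction c generalizing j with
  | zero => rfl
  | succ c ih =>
    rw [horner, Function.iterate_succ_apply', ← horner, coeff_divX, ih]
    congr 1; omega

lemma horner_eq (p : ℝ[X]) (c : ℕ) : horner p c = horner p (c + 1) * X + C (p.coeff c) := by
  have h1 := divX_mul_X_add (horner p c)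
  rw [coeff_horner, zero_add] at h1
  conv_lhs => rw [← h1]
  rw [horner, horner, Function.iterate_succ_apply']

lemma horner_natDegree (p : ℝ[X]) (hp : p.Monic) : horner p p.natDegree = 1 := by
  ext j
  rw [coeff_horner, coeff_one]
  split_ifs with hj
  · rw [hj, zero_add, coeff_natDegree, hp.leadingCoeff]
  · exact coeff_eq_zero_of_natDegree_lt (by omega)

/-- Duality of the monomials and the Horner quotients under the residue pairing. For `c < i`
the product is, modulo `nodePoly`, `-X ^ (i - c - 1)` times the part of `nodePoly` of degree at
most `c`, hence of degree less than `N - 1`. -/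
lemma resSum_X_pow_mul_horner (lam : Fin r → ℝ) (hlam : Function.Injective lam) (n : Fin r → ℕ)
    (hn : ∀ k, 0 < n k) (i c : ℕ) (hi : i < ∑ k, n k) (hc : c < ∑ k, n k) :
    resSum lam n (X ^ i * horner (nodePoly lam n) (c + 1)) = if i = c then 1 else 0 := by
  set p := nodePoly lam n with hp
  have hN : p.natDegree = ∑ k, n k := natDegree_nodePoly lam n
  have hlead : p.coeff (∑ k, n k) = 1 := by
    rw [← hN, coeff_natDegree, (monic_nodePoly lam n).leadingCoeff]
  have hhigh : ∀ j, ∑ k, n k < j → p.coeff j = 0 := fun j hj =>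
    coeff_eq_zero_of_natDegree_lt (by omega)
  rcases le_or_gt i c with hic | hic
  · rw [resSum_eq_coeff lam hlam n hn]
    · rw [coeff_X_pow_mul', if_pos (by omega), coeff_horner]
      split_ifs with h
      · rw [show ∑ k, n k - 1 - i + (c + 1) = ∑ k, n k by omega, hlead]
      · exact hhigh _ (by omega)
    · refine (degree_lt_iff_coeff_zero _ _).2 fun j hj => ?_
      rw [coeff_X_pow_mul', if_pos (by omega), coeff_horner]
      exact hhigh _ (by omega)
  · set low := p - X ^ (c + 1) * horner p (c + 1) with hlow
    have hlowc : ∀ j, c < j → low.coeff j = 0 := by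
      intro j hj
      rw [hlow, coeff_sub, coeff_X_pow_mul', if_pos (by omega), coeff_horner,
        Nat.sub_add_cancel (by omega), sub_self]
    have hq : X ^ i * horner p (c + 1) = X ^ (i - c - 1) * p - X ^ (i - c - 1) * low := by
      rw [hlow, mul_sub, sub_sub_cancel, ← mul_assoc, ← pow_add]
      congr 2; omega
    have hcoef : ∀ j, i ≤ j → (X ^ (i - c - 1) * low).coeff j = 0 := by
      intro j hj
      rw [coeff_X_pow_mul', if_pos (by omega)]
      exact hlowc _ (by omega)
    rw [hq, resSum_sub, hp, resSum_mul_nodePoly lam n hn, zero_sub, resSum_eq_coeff lam hlam n hn,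
      hcoef _ (by omega), neg_zero, if_neg (by omega)]
    exact (degree_lt_iff_coeff_zero _ _).2 fun j hj => hcoef j (by omega)

end Global

end ConfluentVandermonde

end

/-! ### Inversion of the confluent Vandermonde matrix -/

open ConfluentVandermonde in
/-- **Inversion of the confluent Vandermonde matrix (Hou–Pang / Respondek).**
Let `λ 1, …, λ r` be pairwise distinct reals, `n 1, …, n r` positive integers
with `N = ∑ n k`, and `p = ∏ (X - λ k) ^ (n k) = X^N + ∑_{i<N} a_{N-i} X^i`
(so `a m` is the coefficient of `X^(N-m)` for `m = 1, …, N`).  Define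
`K (k, n k) = 1 / ∏_{i ≠ k} (λ k - λ i) ^ (n i)` and recursively, for
`q = 0, …, n k - 2`,
`L k i (q+1) = q! (λ k - λ i)^q K (k, n k - q) - q · L k i q` (with
`L k i 0 = 0`) and
`K (k, n k - q - 1) = -(1/(q+1)!) ∑_{i ≠ k} n i · L k i (q+1) / (λ k - λ i)^(q+1)`.
Set `h (k, 1) = (K (k,1), …, K (k, n k))ᵀ` and
`h (k, m+1) = J(λ k, n k) · h (k, m) + a m • h (k, 1)` for `m = 1, …, N-1`.
Let `W` be the matrix whose rows are grouped into consecutive blocks (via the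
equivalence `e`), the block of rows for `k` being `[h (k,N) | ⋯ | h (k,1)]`.
Then `W` is the inverse of the confluent Vandermonde matrix `V`:
`V * W = 1`. -/
theorem confluent_vandermonde_inverse
    (r : ℕ) (hr : 1 ≤ r) (lam : Fin r → ℝ) (hlam : Function.Injective lam)
    (n : Fin r → ℕ) (hn : ∀ k, 0 < n k)
    (e : (Σ k : Fin r, Fin (n k)) ≃ Fin (∑ u, n u))
    (he : ∀ q : Σ k : Fin r, Fin (n k),
      (e q : ℕ) = (∑ i ∈ univ.filter (fun i => i < q.1), n i) + (q.2 : ℕ))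
    (V : Matrix (Fin (∑ u, n u)) (Fin (∑ u, n u)) ℝ)
    (hV : ∀ (i : Fin (∑ u, n u)) (q : Σ k : Fin r, Fin (n k)),
      V i (e q) = (Nat.choose (i : ℕ) (q.2 : ℕ) : ℝ) * lam q.1 ^ ((i : ℕ) - (q.2 : ℕ)))
    (a : ℕ → ℝ)
    (ha : ∀ m : ℕ, 1 ≤ m → m ≤ (∑ u, n u) →
      a m = (∏ k : Fin r, (X - C (lam k)) ^ (n k)).coeff ((∑ u, n u) - m))
    (K : Fin r → ℕ → ℝ) (L : Fin r → Fin r → ℕ → ℝ)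
    (hKtop : ∀ k, K k (n k) = 1 / ∏ i ∈ univ.erase k, (lam k - lam i) ^ (n i))
    (hL0 : ∀ k i, L k i 0 = 0)
    (hL : ∀ (k i : Fin r) (q : ℕ), i ≠ k → q + 2 ≤ n k →
      L k i (q + 1) =
        (Nat.factorial q : ℝ) * (lam k - lam i) ^ q * K k (n k - q) - (q : ℝ) * L k i q)
    (hK : ∀ (k : Fin r) (q : ℕ), q + 2 ≤ n k →
      K k (n k - q - 1) = -(1 / (Nat.factorial (q + 1) : ℝ)) *
        ∑ i ∈ univ.erase k, (n i : ℝ) * L k i (q + 1) / (lam k - lam i) ^ (q + 1))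
    (h : (k : Fin r) → ℕ → Fin (n k) → ℝ)
    (hh1 : ∀ (k : Fin r) (t : Fin (n k)), h k 1 t = K k ((t : ℕ) + 1))
    (hhrec : ∀ (k : Fin r) (m : ℕ), 1 ≤ m → m + 1 ≤ (∑ u, n u) →
      h k (m + 1) =
        (Matrix.of fun t s : Fin (n k) =>
          if (t : ℕ) = (s : ℕ) then lam k
          else if (t : ℕ) + 1 = (s : ℕ) then (1 : ℝ) else 0).mulVec (h k m)
        + a m • h k 1)
    (W : Matrix (Fin (∑ u, n u)) (Fin (∑ u, n u)) ℝ)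
    (hW : ∀ (q : Σ k : Fin r, Fin (n k)) (c : Fin (∑ u, n u)),
      W (e q) c = h q.1 ((∑ u, n u) - (c : ℕ)) q.2) :
    V * W = 1 := by
  classical
  have hKF : ∀ k q, q < n k → K k (n k - q) = PowerSeries.coeff q (F lam n k) := by
    intro k q
    refine (recursion_solution (univ.erase k) (fun i => lam k - lam i) n (fun i hi => ?_) (n k)
      (K k) (L k) (hKtop k) (fun i hi q hq => hL k i q (ne_of_mem_erase hi) hq) (hK k) q).1
    rw [sub_ne_zero]
    exact fun hh => (Finset.ne_of_mem_erase hi) (hlam hh).symm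
  have hone : ∀ (k : Fin r) (t : Fin (n k)),
      h k 1 t = PowerSeries.coeff (n k - 1 - t) (F lam n k) := by
    intro k t
    have := t.2
    rw [hh1, ← hKF k _ (by omega)]
    congr 1; omega
  have hdeg : (nodePoly lam n).natDegree = (∑ u, n u) := natDegree_nodePoly lam n
  -- Multiplication by `J` is multiplication by `lam k + X` on reversed truncated expansions.
  have hform : ∀ (k : Fin r) (m : ℕ), m + 1 ≤ (∑ u, n u) → ∀ t : Fin (n k), h k (m + 1) t =
      PowerSeries.coeff (n k - 1 - t)
        (F lam n k * tay (lam k) (horner (nodePoly lam n) ((∑ u, n u) - m))) := by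
    intro k m
    induction m with
    | zero =>
      intro _ t
      rw [Nat.sub_zero, ← hdeg, horner_natDegree _ (monic_nodePoly lam n), map_one, mul_one, hone]
    | succ m ih =>
      intro hm t
      have hlt := t.2
      have hJ : (Matrix.of fun t s : Fin (n k) =>
          if (t : ℕ) = (s : ℕ) then lam k
          else if (t : ℕ) + 1 = (s : ℕ) then (1 : ℝ) else 0).mulVec (h k (m + 1)) t =
          PowerSeries.coeff (n k - 1 - t) (lin (lam k) *
            (F lam n k * tay (lam k) (horner (nodePoly lam n) ((∑ u, n u) - m)))) := by
        have hsplit : ∀ s : Fin (n k), (if (t : ℕ) = (s : ℕ) then lam k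
            else if (t : ℕ) + 1 = (s : ℕ) then (1 : ℝ) else 0) * h k (m + 1) s =
            (if t = s then lam k * h k (m + 1) s else 0) +
              (if (t : ℕ) + 1 = (s : ℕ) then h k (m + 1) s else 0) := by
          intro s
          by_cases h1 : t = s
          · subst h1; simp
          · have : (t : ℕ) ≠ s := fun hh => h1 (Fin.ext hh)
            simp [h1, this]
        simp only [Matrix.mulVec, dotProduct, Matrix.of_apply, hsplit, Finset.sum_add_distrib,
          Finset.sum_ite_eq, mem_univ, if_true]
        by_cases hlast : (t : ℕ) + 1 < n k
        · rw [Finset.sum_eq_single (⟨t + 1, hlast⟩ : Fin (n k))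
            (fun s _ hs => if_neg fun hh => hs (Fin.ext hh.symm)) (by simp), if_pos rfl,
            ih (by omega), ih (by omega)]
          rw [show n k - 1 - (t : ℕ) = (n k - 1 - (t + 1)) + 1 by omega, coeff_succ_lin_mul]
          ring
        · rw [Finset.sum_eq_zero (fun s _ => if_neg (by have := s.2; omega)), add_zero,
            ih (by omega), show n k - 1 - (t : ℕ) = 0 by omega, coeff_zero_lin_mul]
      have ham : a (m + 1) = (nodePoly lam n).coeff ((∑ u, n u) - (m + 1)) := ha _ (by omega) (by omega)
      have hstep := horner_eq (nodePoly lam n) ((∑ u, n u) - (m + 1))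
      rw [show (∑ u, n u) - (m + 1) + 1 = (∑ u, n u) - m by omega] at hstep
      rw [hhrec k (m + 1) (by omega) hm, Pi.add_apply, Pi.smul_apply, smul_eq_mul, hJ, hone, ham,
        hstep, map_add, map_mul (tay _), tay_X, tay_C, ← PowerSeries.coeff_C_mul, ← map_add, lin]
      congr 1
      ring
  ext i c
  have hentry : (V * W) i c = resSum lam n (X ^ (i : ℕ) * horner (nodePoly lam n) (c + 1)) := by
    rw [Matrix.mul_apply, ← e.sum_comp, Fintype.sum_sigma, resSum]
    refine Finset.sum_congr rfl fun k _ => ?_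
    -- The sum over `t` is the Cauchy product of the expansions of `s ^ i` and `F` times `Q_c`.
    rw [map_mul (tay _), mul_left_comm, PowerSeries.coeff_mul,
      Finset.Nat.sum_antidiagonal_eq_sum_range_succ (fun x y =>
        PowerSeries.coeff x (tay (lam k) (X ^ (i : ℕ))) * PowerSeries.coeff y
          (F lam n k * tay (lam k) (horner (nodePoly lam n) (c + 1)))),
      show (n k - 1).succ = n k from Nat.succ_pred_eq_of_pos (hn k), ← Fin.sum_univ_eq_sum_range]
    refine Finset.sum_congr rfl fun t _ => ?_
    have hc := c.2
    have hm : (∑ u, n u) - (c : ℕ) = ((∑ u, n u) - c - 1) + 1 := by omega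
    rw [hV, hW]
    simp only
    rw [hm, hform k _ (by omega), show (∑ u, n u) - ((∑ u, n u) - (c : ℕ) - 1) = c + 1 by omega]
    congr 1
    rw [tay_apply, Polynomial.coeff_coe, taylor_pow, taylor_X, coeff_X_add_C_pow, mul_comm]
  rw [hentry, resSum_X_pow_mul_horner lam hlam n hn i c i.2 c.2, Matrix.one_apply]
  simp only [Fin.ext_iff]
end

section
/- Let 0 < a_1 < a_2 < ⋯ < a_n be real numbers and let α_1 < α_2 < ⋯ < α_n be real numbers. Then the determinant of the n×n generalized Vandermonde matrix with (i,j) entry a_j^{α_i} (real-exponent power) is strictly positive; in particular this matrix is invertible. -/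
/-!
With `x j = log (a j)` the matrix has entries `exp (α i * x j)`. An exponential sum with `n`
distinct frequencies that vanishes at `n` points is identically zero: divide by one of the
exponentials, apply Rolle's theorem between consecutive zeros and induct
(`expSum_coeff_eq_zero`). Hence the determinant never vanishes. Deforming the exponents linearly
to `0, 1, …, n - 1` keeps them strictly increasing, so by the intermediate value theorem the
determinant has the sign of the classical Vandermonde determinant, which is positive.
-/

/-- An exponential sum with `n` distinct frequencies and `n` distinct zeros, both listed in
increasing order, has all its coefficients zero. -/
lemma expSum_coeff_eq_zero (n : ℕ) (α x c : Fin n → ℝ) (hα : StrictMono α) (hx : StrictMono x)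
    (h : ∀ j, ∑ i, c i * Real.exp (α i * x j) = 0) : c = 0 := by
  induction n with
  | zero => exact Subsingleton.elim _ _
  | succ n ih =>
    -- Dividing by `exp (α 0 * y)` makes one term constant, so differentiating removes it.
    have hg : ∀ j, c 0 + ∑ i : Fin n, c i.succ * Real.exp ((α i.succ - α 0) * x j) = 0 := by
      intro j
      have h1 : Real.exp (-(α 0 * x j)) * ∑ i, c i * Real.exp (α i * x j) = 0 := by
        rw [h j, mul_zero]
      rw [Finset.mul_sum, Fin.sum_univ_succ] at h1
      rw [← h1]
      congr 1
      · rw [mul_left_comm, ← Real.exp_add]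
        simp
      · refine Finset.sum_congr rfl fun i _ => ?_
        rw [mul_left_comm, ← Real.exp_add]
        ring_nf
    have hd : ∀ y : ℝ, HasDerivAt
        (fun y => c 0 + ∑ i : Fin n, c i.succ * Real.exp ((α i.succ - α 0) * y))
        (∑ i : Fin n, (c i.succ * (α i.succ - α 0)) * Real.exp ((α i.succ - α 0) * y)) y := by
      intro y
      refine (HasDerivAt.fun_sum fun i _ => ?_).const_add (c 0)
      have h1 := (((hasDerivAt_id' y).const_mul (α i.succ - α 0)).exp).const_mul (c i.succ)
      exact h1.congr_deriv (by ring)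
    have hr : ∀ j : Fin n, ∃ y ∈ Set.Ioo (x j.castSucc) (x j.succ),
        ∑ i : Fin n, (c i.succ * (α i.succ - α 0)) * Real.exp ((α i.succ - α 0) * y) = 0 :=
      fun j => exists_hasDerivAt_eq_zero (hx Fin.castSucc_lt_succ)
        (fun y _ => (hd y).continuousAt.continuousWithinAt)
        ((hg j.castSucc).trans (hg j.succ).symm) fun y _ => hd y
    choose y hy hy0 using hr
    have hymono : StrictMono y := fun i j hij =>
      (hy i).2.trans_le ((hx.monotone (Fin.succ_le_castSucc_iff.mpr hij)).trans (hy j).1.le)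
    have hc := ih (fun i => α i.succ - α 0) y (fun i => c i.succ * (α i.succ - α 0))
      (fun i j hij => sub_lt_sub_right (hα (Fin.succ_lt_succ_iff.mpr hij)) _) hymono hy0
    have hs : ∀ i : Fin n, c i.succ = 0 := fun i =>
      (mul_eq_zero.mp (congrFun hc i)).resolve_right (sub_pos.mpr (hα i.succ_pos)).ne'
    have h0 : c 0 = 0 := by simpa [hs] using hg 0
    funext i
    exact Fin.cases h0 hs i

lemma det_rpow_ne_zero (n : ℕ) (a α : Fin n → ℝ) (hpos : ∀ i, 0 < a i)
    (ha : StrictMono a) (hα : StrictMono α) :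
    (Matrix.of fun i j : Fin n => a j ^ α i).det ≠ 0 := by
  intro h
  obtain ⟨v, hv, hv0⟩ := Matrix.exists_vecMul_eq_zero_iff.mpr h
  refine hv (expSum_coeff_eq_zero n α (fun j => Real.log (a j)) v hα
    (fun i j hij => Real.log_lt_log (hpos i) (ha hij)) fun j => ?_)
  refine Eq.trans ?_ (congrFun hv0 j)
  refine Finset.sum_congr rfl fun i _ => ?_
  simp only [Matrix.of_apply, Real.rpow_def_of_pos (hpos j), mul_comm]

/-- The classical case `α i = i`, where the matrix is the transposed Vandermonde matrix. -/
lemma det_rpow_natCast_pos (n : ℕ) (a : Fin n → ℝ) (ha : StrictMono a) :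
    0 < (Matrix.of fun i j : Fin n => a j ^ ((i : ℕ) : ℝ)).det := by
  have : (Matrix.of fun i j : Fin n => a j ^ ((i : ℕ) : ℝ)) = (Matrix.vandermonde a).transpose := by
    ext i j
    simp [Matrix.vandermonde_apply]
  rw [this, Matrix.det_transpose, Matrix.det_vandermonde]
  exact Finset.prod_pos fun i _ => Finset.prod_pos fun j hj =>
    sub_pos.mpr (ha (Finset.mem_Ioi.mp hj))

/-- **Gantmacher's generalized Vandermonde matrix is totally positive at the
top level.**  For reals `0 < a 1 < ⋯ < a n` and `α 1 < ⋯ < α n`, the `n × n`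
matrix with `(i, j)` entry `(a j) ^ (α i)` (real-exponent power) has strictly
positive determinant; in particular it is invertible. -/
theorem gantmacher_vandermonde_det_pos
    (n : ℕ) (a : Fin n → ℝ) (α : Fin n → ℝ)
    (hpos : ∀ i, 0 < a i) (haMono : StrictMono a) (hαMono : StrictMono α) :
    0 < (Matrix.of fun i j : Fin n => a j ^ α i).det ∧
      IsUnit (Matrix.of fun i j : Fin n => a j ^ α i) := by
  have hdet : 0 < (Matrix.of fun i j : Fin n => a j ^ α i).det := by
    by_contra hneg
    let F : ℝ → ℝ := fun s =>
      (Matrix.of fun i j : Fin n => a j ^ ((1 - s) * α i + s * ((i : ℕ) : ℝ))).det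
    have hF : Continuous F := by
      refine Continuous.matrix_det (continuous_matrix fun i j => ?_)
      exact Continuous.rpow continuous_const (by fun_prop) fun _ => Or.inl (hpos j).ne'
    have hF0 : F 0 ≤ 0 := by simpa [F] using hneg
    have hF1 : 0 ≤ F 1 := by simpa [F] using (det_rpow_natCast_pos n a haMono).le
    obtain ⟨s, ⟨hs0, hs1⟩, hs⟩ :=
      intermediate_value_Icc zero_le_one hF.continuousOn ⟨hF0, hF1⟩
    refine det_rpow_ne_zero n a _ hpos haMono (fun i j hij => ?_) hs
    have h1 : α i < α j := hαMono hij
    have h2 : ((i : ℕ) : ℝ) < ((j : ℕ) : ℝ) := by exact_mod_cast hij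
    rcases hs0.eq_or_lt with rfl | hs0
    · simpa using h1
    · exact add_lt_add_of_le_of_lt
        (mul_le_mul_of_nonneg_left h1.le (sub_nonneg.mpr hs1)) (mul_lt_mul_of_pos_left h2 hs0)
  exact ⟨hdet, (Matrix.isUnit_iff_isUnit_det _).mpr hdet.ne'.isUnit⟩
end

section
/- Let λ_1,…,λ_r be pairwise distinct real numbers, n_1,…,n_r positive integers with N = n_1+⋯+n_r, and let V be the associated confluent Vandermonde matrix (which is invertible). Fix k ∈ {1,…,r} and j ∈ {0,…,n_k−1}, and let H ∈ ℝ[X] be any polynomial with deg H < N satisfying (1/l!)·H^{(l)}(λ_m) = 1 if (m,l) = (k,j) and 0 otherwise, for all m = 1,…,r and l = 0,…,n_m−1. Then for every i = 0,…,N−1, the coefficient of X^i in H equals the entry of V^{-1} in the row indexed by (block k, position j) and column i. In other words, the rows of V^{-1} are the coefficient vectors of the Hermite interpolation basis polynomials. -/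
/-!
The map `v ↦ v V` on row vectors sends the coefficients of a polynomial `p` of degree `< N` to the
list of its Hermite data, the values at `λ m` of its Hasse derivatives of order `l < n m`
(`sum_coeff_mul_choose`). A polynomial whose Hermite data all vanish is divisible by the pairwise
coprime factors `(X - λ m) ^ n m`, hence by their product, which has degree `N`, so it is zero if
its degree is `< N` (`eq_zero_of_hasseDeriv_eval_eq_zero`). Thus `V` is invertible. The hypothesis
on `H` says that its coefficient row times `V` is the basis vector at `(k, j)`, so this
coefficient vector is the corresponding row of `V⁻¹`.
-/

open Finset Polynomial

lemma sum_coeff_mul_choose_s8 (N l : ℕ) (p : ℝ[X]) (hp : p.natDegree < N) (x : ℝ) :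
    ∑ i : Fin N, p.coeff i * ((Nat.choose (i : ℕ) l : ℝ) * x ^ ((i : ℕ) - l)) =
      (hasseDeriv l p).eval x := by
  rw [Fin.sum_univ_eq_sum_range
      (fun i => p.coeff i * ((Nat.choose i l : ℝ) * x ^ (i - l))) N,
    hasseDeriv_apply, sum_over_range' _ _ N hp, eval_finsetSum]
  · refine Finset.sum_congr rfl fun i _ => ?_
    rw [eval_monomial]
    ring
  · simp

/-- Uniqueness in Hermite interpolation. -/
lemma eq_zero_of_hasseDeriv_eval_eq_zero (r : ℕ) (lam : Fin r → ℝ)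
    (hlam : Function.Injective lam) (n : Fin r → ℕ) (p : ℝ[X])
    (hp : p.natDegree < ∑ u, n u)
    (h : ∀ m l, l < n m → (hasseDeriv l p).eval (lam m) = 0) : p = 0 := by
  have hdvd : (∏ m, (X - C (lam m)) ^ n m) ∣ p := by
    refine Fintype.prod_dvd_of_coprime (fun a b hab => ?_) fun m => ?_
    · exact (pairwise_coprime_X_sub_C hlam hab).pow
    · rw [X_sub_C_pow_dvd_iff, ← taylor_apply, X_pow_dvd_iff]
      intro l hl
      rw [taylor_coeff]
      exact h m l hl
  refine eq_zero_of_dvd_of_natDegree_lt hdvd ?_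
  rw [natDegree_prod_of_monic _ _ fun m _ => (monic_X_sub_C _).pow _]
  simpa using hp

/-- **The rows of the inverse confluent Vandermonde matrix are the coefficient
vectors of the Hermite interpolation basis polynomials.**  Let
`λ 1, …, λ r` be pairwise distinct reals, `n 1, …, n r` positive integers with
`N = ∑ n k`, and `V` the associated confluent Vandermonde matrix (rows indexed
by `i = 0, …, N-1`, columns grouped into blocks via the equivalence `e`), which
is invertible.  Fix `k` and `j < n k`, and let `H` be any polynomial of degree
`< N` with `(1/l!) · H⁽ˡ⁾(λ m) = 1` if `(m, l) = (k, j)` and `0` otherwise, for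
all `m = 1, …, r`, `l = 0, …, n m - 1`.  Then for each `i`, the coefficient of
`X^i` in `H` equals the entry of `V⁻¹` in row `(block k, position j)` and
column `i`. -/
theorem inverse_confluent_vandermonde_rows_hermite_basis
    (r : ℕ) (hr : 1 ≤ r) (lam : Fin r → ℝ) (hlam : Function.Injective lam)
    (n : Fin r → ℕ) (hn : ∀ k, 0 < n k)
    (e : (Σ k : Fin r, Fin (n k)) ≃ Fin (∑ u, n u))
    (he : ∀ q : Σ k : Fin r, Fin (n k),
      (e q : ℕ) = (∑ i ∈ univ.filter (fun i => i < q.1), n i) + (q.2 : ℕ))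
    (V : Matrix (Fin (∑ u, n u)) (Fin (∑ u, n u)) ℝ)
    (hV : ∀ (i : Fin (∑ u, n u)) (q : Σ k : Fin r, Fin (n k)),
      V i (e q) = (Nat.choose (i : ℕ) (q.2 : ℕ) : ℝ) * lam q.1 ^ ((i : ℕ) - (q.2 : ℕ)))
    (k : Fin r) (j : Fin (n k))
    (H : Polynomial ℝ) (hdeg : H.natDegree < (∑ u, n u))
    (hH : ∀ (m : Fin r) (l : ℕ), l < n m →
      (1 / (Nat.factorial l : ℝ)) * (Polynomial.derivative^[l] H).eval (lam m) =
        if m = k ∧ l = (j : ℕ) then 1 else 0) :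
    IsUnit V.det ∧ ∀ i : Fin (∑ u, n u), V⁻¹ (e ⟨k, j⟩) i = H.coeff (i : ℕ) := by
  have key : ∀ p : ℝ[X], p.natDegree < (∑ u, n u) → ∀ q : Σ k : Fin r, Fin (n k),
      Matrix.vecMul (fun i : Fin (∑ u, n u) => p.coeff i) V (e q) =
        (hasseDeriv q.2 p).eval (lam q.1) := by
    intro p hp q
    rw [← sum_coeff_mul_choose_s8 _ _ p hp]
    simp only [Matrix.vecMul, dotProduct, hV]
  have hunit : IsUnit V := by
    rw [← Matrix.vecMul_injective_iff_isUnit]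
    refine (injective_iff_map_eq_zero (Matrix.vecMulLinear V)).2 fun v hv => ?_
    have hN : 1 ≤ ∑ u, n u := by omega
    have hdeg' : (ofFn (∑ u, n u) v).natDegree < ∑ u, n u := ofFn_natDegree_lt hN v
    have hc : (fun i : Fin (∑ u, n u) => (ofFn (∑ u, n u) v).coeff i) = v := by
      funext i
      exact ofFn_coeff_eq_val_of_lt v i.2
    have h0 := eq_zero_of_hasseDeriv_eval_eq_zero r lam hlam n _ hdeg' fun m l hl => by
      have h1 := key _ hdeg' ⟨m, ⟨l, hl⟩⟩
      rw [hc] at h1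
      rw [← h1]
      exact congrFun hv _
    rw [← hc, h0]
    funext i
    simp
  have hdet : IsUnit V.det := (Matrix.isUnit_iff_isUnit_det V).1 hunit
  have hrow : Matrix.vecMul (fun i : Fin (∑ u, n u) => H.coeff i) V =
      Pi.single (e ⟨k, j⟩) 1 := by
    funext c
    obtain ⟨⟨m, l⟩, rfl⟩ := e.surjective c
    have hfac : ((l : ℕ).factorial : ℝ) ≠ 0 := by positivity
    have h1 := hH m l l.2
    rw [← factorial_smul_hasseDeriv, LinearMap.smul_apply, eval_smul, nsmul_eq_mul, ← mul_assoc,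
      one_div_mul_cancel hfac, one_mul] at h1
    rw [key H hdeg, h1, Pi.single_apply]
    refine if_congr ?_ rfl rfl
    rw [e.injective.eq_iff]
    constructor
    · rintro ⟨rfl, hl⟩
      rw [Fin.ext hl]
    · intro heq
      cases heq
      exact ⟨rfl, rfl⟩
  refine ⟨hdet, fun i => ?_⟩
  have h2 := congrArg (fun w => Matrix.vecMul w V⁻¹) hrow
  simp only [Matrix.vecMul_vecMul, Matrix.mul_nonsing_inv V hdet, Matrix.vecMul_one,
    Matrix.single_one_vecMul] at h2
  exact (congrFun h2 i).symm
end
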